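/- There exists a nonnegative function φ : ℝ → ℝ of class C^∞ with compact support contained in [0,2], such that φ(τ) = 1 for τ ∈ [0,1], φ(τ) > 0 for τ ∈ [0,2), φ(τ) = 0 for τ ≥ 2, and for every i ∈ ℕ the integral ∫₀² |φ^{(i)}(τ)|² / φ(τ) dτ is finite. -/

import Mathlib

/-!
The cutoff is `τ ↦ Real.smoothTransition (2 - τ)`, where `Real.smoothTransition = E * g` with `g`
smooth and positive and `E x = exp (-1 / x)` for `x > 0`. Each derivative of `E * g` costs at most a
factor `x⁻²`, so the `i`-th one is `x⁻²ⁱ * E * G` with `G` smooth. Its square contains `E ^ 2`, so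
dividing by `E * g` leaves a factor `E`, which absorbs all the negative powers of `x`. With the
convention `0 / 0 = 0`, the quotient is therefore continuous on the whole line.
-/

open scoped ContDiff

theorem continuous_inv_pow_mul_expNegInvGlue (n : ℕ) :
    Continuous fun x : ℝ => x⁻¹ ^ n * expNegInvGlue x := by
  simpa using expNegInvGlue.continuous_polynomial_eval_inv_mul (Polynomial.X ^ n)

theorem hasDerivAt_inv_pow_mul_expNegInvGlue (n : ℕ) (x : ℝ) :
    HasDerivAt (fun y : ℝ => y⁻¹ ^ n * expNegInvGlue y)
      (x⁻¹ ^ (n + 2) * expNegInvGlue x * (1 - n * x)) x := by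
  have h := expNegInvGlue.hasDerivAt_polynomial_eval_inv_mul (Polynomial.X ^ n) x
  simp only [Polynomial.eval_pow, Polynomial.eval_X] at h
  convert! h using 1
  rcases eq_or_ne x 0 with rfl | hx
  · simp
  · cases n with
    | zero => simp
    | succ n =>
      simp only [Polynomial.derivative_X_pow, Polynomial.eval_mul, Polynomial.eval_sub,
        Polynomial.eval_pow, Polynomial.eval_X, Polynomial.eval_C, Nat.add_sub_cancel]
      linear_combination
        (-(n + 1 : ℕ) * expNegInvGlue x * x⁻¹ ^ (n + 2)) * inv_mul_cancel₀ hx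

section

variable {F : Type*} [NormedAddCommGroup F] [NormedSpace ℝ F] {g : ℝ → F}

theorem hasDerivAt_inv_pow_mul_expNegInvGlue_smul {g' : F} {x : ℝ} (n : ℕ)
    (hg : HasDerivAt g g' x) :
    HasDerivAt (fun y => (y⁻¹ ^ n * expNegInvGlue y) • g y)
      ((x⁻¹ ^ (n + 2) * expNegInvGlue x) • ((1 - n * x) • g x + x ^ 2 • g')) x := by
  convert! (hasDerivAt_inv_pow_mul_expNegInvGlue n x).smul hg using 1
  rcases eq_or_ne x 0 with rfl | hx
  · simp
  · have hcancel : x⁻¹ ^ (n + 2) * expNegInvGlue x * x ^ 2 = x⁻¹ ^ n * expNegInvGlue x := by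
      rw [pow_add]
      field_simp
    rw [smul_add, smul_smul, smul_smul, hcancel, add_comm]

theorem exists_iteratedDeriv_expNegInvGlue_smul_eq (hg : ContDiff ℝ ∞ g) (i : ℕ) :
    ∃ G : ℝ → F, ContDiff ℝ ∞ G ∧ iteratedDeriv i (fun x => expNegInvGlue x • g x) =
      fun x => (x⁻¹ ^ (2 * i) * expNegInvGlue x) • G x := by
  induction i with
  | zero => exact ⟨g, hg, by simp⟩
  | succ i ih =>
    obtain ⟨G, hG, hderiv⟩ := ih
    have : ContDiff ℝ ∞ (deriv G) := (contDiff_infty_iff_deriv.1 hG).2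
    refine ⟨fun x => (1 - (2 * i : ℕ) * x) • G x + x ^ 2 • deriv G x, by fun_prop, ?_⟩
    rw [iteratedDeriv_succ, hderiv]
    exact deriv_eq fun x => hasDerivAt_inv_pow_mul_expNegInvGlue_smul _
      (hG.differentiable (by simp) x).hasDerivAt

theorem continuous_norm_iteratedDeriv_expNegInvGlue_smul_pow_div (hg : ContDiff ℝ ∞ g) (i : ℕ)
    {k m : ℕ} (hkm : k < m) :
    Continuous fun x =>
      ‖iteratedDeriv i (fun y => expNegInvGlue y • g y) x‖ ^ m / expNegInvGlue x ^ k := by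
  obtain ⟨G, hG, hderiv⟩ := exists_iteratedDeriv_expNegInvGlue_smul_eq hg i
  obtain ⟨l, rfl⟩ := Nat.exists_eq_add_of_lt hkm
  have hcont : Continuous fun x : ℝ => x⁻¹ ^ (2 * i * (k + l + 1)) * expNegInvGlue x *
      (expNegInvGlue x ^ l * ‖G x‖ ^ (k + l + 1)) :=
    (continuous_inv_pow_mul_expNegInvGlue _).mul
      ((expNegInvGlue.contDiff (n := 0).continuous.pow l).mul (hG.continuous.norm.pow _))
  refine hcont.congr fun x => ?_
  have hnonneg : 0 ≤ x⁻¹ ^ (2 * i) * expNegInvGlue x :=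
    mul_nonneg ((even_two_mul i).pow_nonneg _) (expNegInvGlue.nonneg x)
  rw [hderiv, norm_smul, Real.norm_of_nonneg hnonneg]
  rcases eq_or_ne (expNegInvGlue x) 0 with hE | hE
  · simp [hE]
  · rw [eq_div_iff (pow_ne_zero k hE)]
    ring

end

theorem continuous_abs_iteratedDeriv_smoothTransition_pow_div (i : ℕ) {k m : ℕ} (hkm : k < m) :
    Continuous fun x =>
      |iteratedDeriv i Real.smoothTransition x| ^ m / Real.smoothTransition x ^ k := by
  set d : ℝ → ℝ := fun x => expNegInvGlue x + expNegInvGlue (1 - x)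
  have hd : ContDiff ℝ ∞ d := by fun_prop
  have hd_inv : ContDiff ℝ ∞ fun x => (d x)⁻¹ :=
    hd.inv fun x => (Real.smoothTransition.pos_denom x).ne'
  have hfactor : Real.smoothTransition = fun x => expNegInvGlue x • (d x)⁻¹ :=
    funext fun x => div_eq_mul_inv _ _
  have hquot := continuous_norm_iteratedDeriv_expNegInvGlue_smul_pow_div hd_inv i hkm
  refine (hquot.mul (hd.continuous.pow k)).congr fun x => ?_
  rw [← hfactor, Pi.mul_apply, Pi.pow_apply, Real.norm_eq_abs, div_mul_eq_mul_div,
    ← div_div_eq_mul_div, ← div_pow]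
  rfl

/-- Existence of the Mitidieri–Pohozaev cutoff function `φ₀ ∈ C₀^∞[0,∞)`:
smooth, nonnegative, equal to `1` on `[0,1]`, positive on `[0,2)`, vanishing
for `τ ≥ 2` (i.e. its support in `[0,∞)` is contained in `[0,2]`), and with
`∫₀² |φ^{(i)}|²/φ < ∞` for every `i`. -/
theorem stmt4 :
    ∃ φ : ℝ → ℝ, ContDiff ℝ (⊤ : ℕ∞) φ ∧ (∀ τ, 0 ≤ φ τ) ∧
      (∀ τ ∈ Set.Icc (0 : ℝ) 1, φ τ = 1) ∧
      (∀ τ ∈ Set.Ico (0 : ℝ) 2, 0 < φ τ) ∧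
      (∀ τ ≥ (2 : ℝ), φ τ = 0) ∧
      ∀ i : ℕ, MeasureTheory.IntegrableOn
        (fun τ => |iteratedDeriv i φ τ| ^ 2 / φ τ) (Set.Ioo (0 : ℝ) 2) := by
  refine ⟨fun τ => Real.smoothTransition (2 - τ), by fun_prop,
    fun τ => Real.smoothTransition.nonneg _,
    fun τ hτ => Real.smoothTransition.one_of_one_le (by linarith [hτ.2]),
    fun τ hτ => Real.smoothTransition.pos_of_pos (by linarith [hτ.2]),
    fun τ hτ => Real.smoothTransition.zero_of_nonpos (by linarith), fun i => ?_⟩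
  have hcont : Continuous fun τ : ℝ =>
      |iteratedDeriv i Real.smoothTransition (2 - τ)| ^ 2 / Real.smoothTransition (2 - τ) := by
    simpa [Function.comp_def] using
      (continuous_abs_iteratedDeriv_smoothTransition_pow_div i one_lt_two).comp
        (continuous_const.sub continuous_id : Continuous fun τ : ℝ => 2 - τ)
  simpa [iteratedDeriv_comp_const_sub, abs_mul] using
    hcont.integrableOn_Icc.mono_set Set.Ioo_subset_Icc_self
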